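/- The binary operation · on TS³ is associative: for all g₁ = (q₁,p₁), g₂ = (q₂,p₂), g₃ = (q₃,p₃) with qᵢ ∈ ℝ⁴, ‖qᵢ‖ = 1 and qᵢᵀpᵢ = 0 for i = 1,2,3, one has (g₁ · g₂) · g₃ = g₁ · (g₂ · g₃). -/

import Mathlib

/-!
Identify ℝ⁴ with the quaternions, so that `Q(a) b = a b = W(b) a`. With `φ(q) = λ (q₀ q - 1̄)`, the
second component `p` of `(q₁, p₁) · (q₂, p₂)` satisfies
`p + φ(q₁ q₂) = q₁ (p₂ + φ(q₂)) + (p₁ + φ(q₁)) q₂`. Hence the shear `(q, p) ↦ q + ε (p + φ(q))`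
turns the operation into multiplication of dual quaternions, and associativity is pulled back along
this injection.
-/

open Matrix

noncomputable section

/-- Cross-product (hat) matrix of a 3-vector: `vecHat v *ᵥ u = v ×₃ u`. -/
def vecHat (v : Fin 3 → ℝ) : Matrix (Fin 3) (Fin 3) ℝ :=
  !![0, -v 2, v 1; v 2, 0, -v 0; -v 1, v 0, 0]

/-- The 4×3 matrix J(x): first row −x⃗ᵀ, lower 3×3 block x₀I₃ + x⃗^∧. -/
def Jmat (x : Fin 4 → ℝ) : Matrix (Fin 4) (Fin 3) ℝ :=
  Matrix.of fun i j =>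
    if h : i = 0 then -x j.succ
    else (x 0 • (1 : Matrix (Fin 3) (Fin 3) ℝ) + vecHat fun k => x k.succ) (i.pred h) j

/-- The 4×3 matrix L(x): first row −x⃗ᵀ, lower 3×3 block x₀I₃ − x⃗^∧. -/
def Lmat (x : Fin 4 → ℝ) : Matrix (Fin 4) (Fin 3) ℝ :=
  Matrix.of fun i j =>
    if h : i = 0 then -x j.succ
    else (x 0 • (1 : Matrix (Fin 3) (Fin 3) ℝ) - vecHat fun k => x k.succ) (i.pred h) j

/-- The 4×4 matrix Q(x) = [x J(x)] (first column x, remaining columns J(x)). -/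
def Qmat (x : Fin 4 → ℝ) : Matrix (Fin 4) (Fin 4) ℝ :=
  Matrix.of fun i j => if h : j = 0 then x i else Jmat x i (j.pred h)

/-- The 4×4 matrix W(x) = [x L(x)] (first column x, remaining columns L(x)). -/
def Wmat (x : Fin 4 → ℝ) : Matrix (Fin 4) (Fin 4) ℝ :=
  Matrix.of fun i j => if h : j = 0 then x i else Lmat x i (j.pred h)

/-- Euclidean norm on ℝ⁴: ‖x‖ = (xᵀx)^{1/2}. -/
def norm4 (x : Fin 4 → ℝ) : ℝ := Real.sqrt (x ⬝ᵥ x)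

/-- The identity quaternion 1̄ = (1,0,0,0) ∈ ℝ⁴. -/
def one4 : Fin 4 → ℝ := ![1, 0, 0, 0]

/-- The binary operation on TS³ from Eq. (12) of the paper (with parameter λ). -/
def gmul (lam : ℝ) (g₁ g₂ : (Fin 4 → ℝ) × (Fin 4 → ℝ)) : (Fin 4 → ℝ) × (Fin 4 → ℝ) :=
  (Qmat g₁.1 *ᵥ g₂.1,
    Qmat g₁.1 *ᵥ g₂.2 + Wmat g₂.1 *ᵥ g₁.2
      + lam • (Qmat g₁.1 *ᵥ (g₂.1 0 • g₂.1 - one4))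
      + lam • (Wmat g₂.1 *ᵥ (g₁.1 0 • g₁.1 - one4))
      - lam • ((Qmat g₁.1 *ᵥ g₂.1) 0 • (Qmat g₁.1 *ᵥ g₂.1) - one4))

open scoped Quaternion

lemma Qmat_eq (x : Fin 4 → ℝ) :
    Qmat x = !![x 0, -x 1, -x 2, -x 3;
                x 1,  x 0, -x 3,  x 2;
                x 2,  x 3,  x 0, -x 1;
                x 3, -x 2,  x 1,  x 0] := by
  ext i j
  fin_cases i <;> fin_cases j <;>
    simp [Qmat, Jmat, vecHat, Fin.pred, Fin.subNat, Matrix.one_apply]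

lemma Wmat_eq (x : Fin 4 → ℝ) :
    Wmat x = !![x 0, -x 1, -x 2, -x 3;
                x 1,  x 0,  x 3, -x 2;
                x 2, -x 3,  x 0,  x 1;
                x 3,  x 2, -x 1,  x 0] := by
  ext i j
  fin_cases i <;> fin_cases j <;>
    simp [Wmat, Lmat, vecHat, Fin.pred, Fin.subNat, Matrix.one_apply]

/-- The identification of ℝ⁴ with the quaternions, the coordinate `x 0` being the real part. Under
it `Qmat` and `Wmat` become left and right multiplication. -/
def toQuaternion : (Fin 4 → ℝ) ≃ₗ[ℝ] ℍ[ℝ] :=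
  (QuaternionAlgebra.linearEquivTuple (-1) 0 (-1)).symm

@[simp] lemma re_toQuaternion (x : Fin 4 → ℝ) : (toQuaternion x).re = x 0 := rfl

@[simp] lemma imI_toQuaternion (x : Fin 4 → ℝ) : (toQuaternion x).imI = x 1 := rfl

@[simp] lemma imJ_toQuaternion (x : Fin 4 → ℝ) : (toQuaternion x).imJ = x 2 := rfl

@[simp] lemma imK_toQuaternion (x : Fin 4 → ℝ) : (toQuaternion x).imK = x 3 := rfl

lemma toQuaternion_Qmat_mulVec (a b : Fin 4 → ℝ) :
    toQuaternion (Qmat a *ᵥ b) = toQuaternion a * toQuaternion b := by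
  ext <;>
    simp only [Qmat_eq, re_toQuaternion, imI_toQuaternion, imJ_toQuaternion, imK_toQuaternion,
      Quaternion.re_mul, Quaternion.imI_mul, Quaternion.imJ_mul, Quaternion.imK_mul, cons_mulVec,
      empty_mulVec, dotProduct, Fin.sum_univ_four, cons_val] <;>
    ring

lemma toQuaternion_Wmat_mulVec (a b : Fin 4 → ℝ) :
    toQuaternion (Wmat b *ᵥ a) = toQuaternion a * toQuaternion b := by
  ext <;>
    simp only [Wmat_eq, re_toQuaternion, imI_toQuaternion, imJ_toQuaternion, imK_toQuaternion,
      Quaternion.re_mul, Quaternion.imI_mul, Quaternion.imJ_mul, Quaternion.imK_mul, cons_mulVec,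
      empty_mulVec, dotProduct, Fin.sum_univ_four, cons_val] <;>
    ring

/-- The shift `φ(q) = λ (q₀ q - 1̄)` of the second component over `q`, by which `gmul` differs from
the multiplication of dual quaternions. -/
def fiberShift (lam : ℝ) (q : Fin 4 → ℝ) : Fin 4 → ℝ := lam • (q 0 • q - one4)

lemma gmul_snd_add_fiberShift (lam : ℝ) (g₁ g₂ : (Fin 4 → ℝ) × (Fin 4 → ℝ)) :
    (gmul lam g₁ g₂).2 + fiberShift lam (gmul lam g₁ g₂).1 =
      Qmat g₁.1 *ᵥ (g₂.2 + fiberShift lam g₂.1) + Wmat g₂.1 *ᵥ (g₁.2 + fiberShift lam g₁.1) := by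
  simp only [gmul, fiberShift, mulVec_add, mulVec_smul]
  abel

/-- The dual quaternion `q + ε (p + φ(q))` of a pair `(q, p)`, where `φ` is `fiberShift`; it embeds
the operation `gmul` into the multiplication of dual quaternions. -/
def toDualQuaternion (lam : ℝ) (g : (Fin 4 → ℝ) × (Fin 4 → ℝ)) : DualNumber ℍ[ℝ] :=
  .inl (toQuaternion g.1) + .inr (toQuaternion (g.2 + fiberShift lam g.1))

@[simp] lemma fst_toDualQuaternion (lam : ℝ) (g : (Fin 4 → ℝ) × (Fin 4 → ℝ)) :
    (toDualQuaternion lam g).fst = toQuaternion g.1 := by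
  simp [toDualQuaternion]

@[simp] lemma snd_toDualQuaternion (lam : ℝ) (g : (Fin 4 → ℝ) × (Fin 4 → ℝ)) :
    (toDualQuaternion lam g).snd = toQuaternion (g.2 + fiberShift lam g.1) := by
  simp [toDualQuaternion]

lemma toDualQuaternion_injective (lam : ℝ) : Function.Injective (toDualQuaternion lam) := by
  rintro ⟨q₁, p₁⟩ ⟨q₂, p₂⟩ h
  obtain rfl : q₁ = q₂ := toQuaternion.injective (by simpa using congrArg TrivSqZeroExt.fst h)
  have hp : p₁ + fiberShift lam q₁ = p₂ + fiberShift lam q₁ :=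
    toQuaternion.injective (by simpa using congrArg TrivSqZeroExt.snd h)
  rw [add_right_cancel hp]

lemma toDualQuaternion_gmul (lam : ℝ) (g₁ g₂ : (Fin 4 → ℝ) × (Fin 4 → ℝ)) :
    toDualQuaternion lam (gmul lam g₁ g₂) = toDualQuaternion lam g₁ * toDualQuaternion lam g₂ := by
  apply TrivSqZeroExt.ext
  · simp only [fst_toDualQuaternion, TrivSqZeroExt.fst_mul, gmul, toQuaternion_Qmat_mulVec]
  · simp only [snd_toDualQuaternion, fst_toDualQuaternion, DualNumber.snd_mul]
    rw [gmul_snd_add_fiberShift, map_add, toQuaternion_Qmat_mulVec, toQuaternion_Wmat_mulVec]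

theorem stmt15_general (lam : ℝ) (g₁ g₂ g₃ : (Fin 4 → ℝ) × (Fin 4 → ℝ)) :
    gmul lam (gmul lam g₁ g₂) g₃ = gmul lam g₁ (gmul lam g₂ g₃) :=
  toDualQuaternion_injective lam <| by simp only [toDualQuaternion_gmul, mul_assoc]

/-- The binary operation on TS³ is associative. -/
theorem stmt15 (lam : ℝ) (hlam : 0 < lam)
    (q₁ p₁ q₂ p₂ q₃ p₃ : Fin 4 → ℝ)
    (hq₁ : norm4 q₁ = 1) (hp₁ : q₁ ⬝ᵥ p₁ = 0)
    (hq₂ : norm4 q₂ = 1) (hp₂ : q₂ ⬝ᵥ p₂ = 0)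
    (hq₃ : norm4 q₃ = 1) (hp₃ : q₃ ⬝ᵥ p₃ = 0) :
    gmul lam (gmul lam (q₁, p₁) (q₂, p₂)) (q₃, p₃)
      = gmul lam (q₁, p₁) (gmul lam (q₂, p₂) (q₃, p₃)) :=
  stmt15_general lam (q₁, p₁) (q₂, p₂) (q₃, p₃)
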